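/- Let D ≥ 1 and let u, v : Fin D → ℝ with Var(u) > 0 and Var(v) > 0, and let N(x)_i = (x_i − μ(x))/sqrt(Var(x)). Then N(u) = N(v) if and only if there exist a real c > 0 and a real d such that v = c•u + d•𝟙. -/

import Mathlib

open Finset

/-- Empirical mean of a vector. -/
noncomputable def emean {D : ℕ} (x : Fin D → ℝ) : ℝ := (1 / (D : ℝ)) * ∑ i, x i

/-- Empirical variance of a vector. -/
noncomputable def evar {D : ℕ} (x : Fin D → ℝ) : ℝ :=
  (1 / (D : ℝ)) * ∑ i, (x i - emean x) ^ 2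

/-- LayerNorm normalization step. -/
noncomputable def nrm {D : ℕ} (x : Fin D → ℝ) : Fin D → ℝ :=
  fun i => (x i - emean x) / Real.sqrt (evar x)

/-- LayerNorm with per-channel parameters γ, β. -/
noncomputable def layerNorm {D : ℕ} (γ β : Fin D → ℝ) (x : Fin D → ℝ) : Fin D → ℝ :=
  fun i => γ i * nrm x i + β i

lemma emean_affine {D : ℕ} (hD : D ≠ 0) (c d : ℝ) (x : Fin D → ℝ) :
    emean (c • x + d • (fun _ => (1 : ℝ))) = c * emean x + d := by
  have hD' : (D : ℝ) ≠ 0 := Nat.cast_ne_zero.mpr hD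
  simp only [emean, Pi.add_apply, Pi.smul_apply, smul_eq_mul, mul_one, sum_add_distrib,
    ← mul_sum, sum_const, card_univ, Fintype.card_fin, nsmul_eq_mul]
  field_simp

lemma sub_emean_affine {D : ℕ} (c d : ℝ) (x : Fin D → ℝ) (i : Fin D) :
    (c • x + d • (fun _ => (1 : ℝ)) : Fin D → ℝ) i - emean (c • x + d • (fun _ => (1 : ℝ))) =
      c * (x i - emean x) := by
  rw [emean_affine i.pos.ne']
  simp only [Pi.add_apply, Pi.smul_apply, smul_eq_mul]
  ring

lemma evar_affine {D : ℕ} (c d : ℝ) (x : Fin D → ℝ) :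
    evar (c • x + d • (fun _ => (1 : ℝ))) = c ^ 2 * evar x := by
  simp only [evar, sub_emean_affine, mul_pow, ← mul_sum]
  ring

lemma nrm_affine {D : ℕ} {c : ℝ} (hc : 0 < c) (d : ℝ) (x : Fin D → ℝ) :
    nrm (c • x + d • (fun _ => (1 : ℝ))) = nrm x := by
  funext i
  simp only [nrm, sub_emean_affine, evar_affine]
  rw [Real.sqrt_mul (sq_nonneg c), Real.sqrt_sq hc.le, mul_div_mul_left _ _ hc.ne']

theorem stmt_3 {D : ℕ} (hD : 1 ≤ D) (u v : Fin D → ℝ)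
    (hu : 0 < evar u) (hv : 0 < evar v) :
    nrm u = nrm v ↔ ∃ c : ℝ, 0 < c ∧ ∃ d : ℝ, v = c • u + d • (fun _ => (1 : ℝ)) := by
  constructor
  · intro h
    have hsu := Real.sqrt_pos.mpr hu
    have hsv := Real.sqrt_pos.mpr hv
    refine ⟨√(evar v) / √(evar u), div_pos hsv hsu,
      emean v - √(evar v) / √(evar u) * emean u, ?_⟩
    funext i
    have hi : (u i - emean u) / √(evar u) = (v i - emean v) / √(evar v) := congrFun h i
    rw [eq_div_iff hsv.ne'] at hi
    simp only [Pi.add_apply, Pi.smul_apply, smul_eq_mul]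
    linear_combination -hi
  · rintro ⟨c, hc, d, rfl⟩
    exact (nrm_affine hc d u).symm
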